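/- arXiv:2207.14791 — 2 statements merged into one kernel-verified Lean document; each statement's English description precedes it below -/
import Mathlib

section
/- For m > 0 and b > 0, (b^m / (2π)) ∫₀^∞ 1/(√p (1+p)(b+1+p)^m) dp = (1/2) I_{b/(1+b)}(m, 1/2), where I_x(a,c) is the regularized incomplete beta function. -/
open MeasureTheory Real Set

noncomputable def incBeta (x a b : ℝ) : ℝ :=
  ∫ t in (0:ℝ)..x, t ^ (a - 1) * (1 - t) ^ (b - 1)

noncomputable def regIncBeta (x a b : ℝ) : ℝ := incBeta x a b / incBeta 1 a b

open Filter Topology in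
lemma aux_arctan :
    IntegrableOn (fun p : ℝ => 1 / (Real.sqrt p * (1 + p))) (Ioi 0) ∧
    ∫ p in Ioi (0:ℝ), 1 / (Real.sqrt p * (1 + p)) = Real.pi := by
  have hc : ContinuousWithinAt (fun p : ℝ => 2 * Real.arctan (Real.sqrt p)) (Ici 0) 0 := by
    apply Continuous.continuousWithinAt
    fun_prop
  have hd : ∀ x ∈ Ioi (0:ℝ), HasDerivAt (fun p : ℝ => 2 * Real.arctan (Real.sqrt p))
      (1 / (Real.sqrt x * (1 + x))) x := by
    intro x hx
    have hx : 0 < x := hx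
    have h := ((Real.hasDerivAt_sqrt hx.ne').arctan).const_mul 2
    refine h.congr_deriv ?_
    rw [Real.sq_sqrt hx.le]
    have : Real.sqrt x ≠ 0 := (Real.sqrt_pos.2 hx).ne'
    field_simp
  have hn : ∀ x ∈ Ioi (0:ℝ), 0 ≤ 1 / (Real.sqrt x * (1 + x)) := by
    intro x hx
    have hx : 0 < x := hx
    positivity
  have ht : Tendsto (fun p : ℝ => 2 * Real.arctan (Real.sqrt p)) atTop (𝓝 (2 * (Real.pi / 2))) :=
    ((tendsto_nhds_of_tendsto_nhdsWithin Real.tendsto_arctan_atTop).comp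
      Real.tendsto_sqrt_atTop).const_mul 2
  refine ⟨integrableOn_Ioi_deriv_of_nonneg hc hd hn ht, ?_⟩
  rw [integral_Ioi_of_hasDerivAt_of_nonneg hc hd hn ht]
  simp
  ring

/-- The constant. -/
noncomputable def auxC (m : ℝ) : ℝ :=
  ∫ u in Ioi (0:ℝ), (Real.sqrt u)⁻¹ * (1 + u) ^ (-m - 1)

lemma aux_C_int (m : ℝ) (hm : 0 < m) :
    IntegrableOn (fun u : ℝ => (Real.sqrt u)⁻¹ * (1 + u) ^ (-m - 1)) (Ioi 0) := by
  refine Integrable.mono' aux_arctan.1 ?_ ?_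
  · exact (by fun_prop : Measurable _).aestronglyMeasurable
  · filter_upwards [ae_restrict_mem measurableSet_Ioi] with u hu
    have hu : 0 < u := hu
    rw [Real.norm_of_nonneg (by positivity), one_div, mul_inv]
    gcongr
    rw [← Real.rpow_neg_one]
    exact Real.rpow_le_rpow_of_exponent_le (by linarith) (by linarith)

lemma aux_scale_fun (m s u : ℝ) (hs : 0 < s) (hu : 0 < u) :
    (Real.sqrt ((1 + s) * u))⁻¹ * (s + 1 + (1 + s) * u) ^ (-m - 1)
      = (1 + s) ^ (-m - 3 / 2) * ((Real.sqrt u)⁻¹ * (1 + u) ^ (-m - 1)) := by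
  have h1 : (0:ℝ) < 1 + s := by linarith
  rw [show s + 1 + (1 + s) * u = (1 + s) * (1 + u) by ring,
    Real.mul_rpow h1.le (by linarith), Real.sqrt_mul h1.le, mul_inv,
    show -m - 3 / 2 = -(1 / 2) + (-m - 1) by ring, Real.rpow_add h1, Real.rpow_neg h1.le,
    ← Real.sqrt_eq_rpow]
  ring

lemma aux_scale (m s : ℝ) (hm : 0 < m) (hs : 0 < s) :
    IntegrableOn (fun p : ℝ => (Real.sqrt p)⁻¹ * (s + 1 + p) ^ (-m - 1)) (Ioi 0) ∧
    ∫ p in Ioi (0:ℝ), (Real.sqrt p)⁻¹ * (s + 1 + p) ^ (-m - 1)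
      = (1 + s) ^ (-m - 1 / 2) * auxC m := by
  have h1 : (0:ℝ) < 1 + s := by linarith
  constructor
  · have := (integrableOn_Ioi_comp_mul_left_iff
      (fun p : ℝ => (Real.sqrt p)⁻¹ * (s + 1 + p) ^ (-m - 1)) 0 h1)
    rw [mul_zero] at this
    rw [← this]
    refine IntegrableOn.congr_fun ((aux_C_int m hm).const_mul ((1 + s) ^ (-m - 3 / 2))) ?_
      measurableSet_Ioi
    intro u hu
    exact (aux_scale_fun m s u hs hu).symm
  · have := integral_comp_mul_left_Ioi'
      (fun p : ℝ => (Real.sqrt p)⁻¹ * (s + 1 + p) ^ (-m - 1)) 0 h1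
    rw [mul_zero] at this
    rw [← this, setIntegral_congr_fun measurableSet_Ioi
      (fun u hu => aux_scale_fun m s u hs hu), integral_const_mul, smul_eq_mul, ← mul_assoc, auxC]
    congr 1
    rw [show -m - 1 / 2 = 1 + (-m - 3 / 2) by ring, Real.rpow_add h1, Real.rpow_one]

lemma aux_II (m c e b : ℝ) (hm : 0 < m) (hc : 0 < c) (hb : 0 < b) :
    IntervalIntegrable (fun s : ℝ => s ^ (m - 1) * (s + c) ^ e) volume 0 b := by
  apply IntervalIntegrable.mul_continuousOn
  · exact intervalIntegral.intervalIntegrable_rpow' (by linarith)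
  · intro x hx
    rw [uIcc_of_le hb.le] at hx
    apply ContinuousWithinAt.rpow_const (by fun_prop)
    left
    linarith [hx.1]

lemma aux_ftc (m c b : ℝ) (hm : 0 < m) (hc : 0 < c) (hb : 0 < b) :
    ∫ s in (0:ℝ)..b, m * (s ^ (m - 1) * (s + c) ^ (-m - 1)) = (b / (b + c)) ^ m / c := by
  rw [intervalIntegral.integral_eq_sub_of_hasDerivAt_of_le (f := fun s => (s / (s + c)) ^ m / c)
    hb.le ?_ ?_ ((aux_II m c _ b hm hc hb).const_mul m)]
  · simp [Real.zero_rpow hm.ne']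
  · intro x hx
    have : x + c ≠ 0 := by linarith [hx.1]
    refine ContinuousWithinAt.div_const (ContinuousWithinAt.rpow_const ?_ (Or.inr hm.le)) _
    exact ContinuousWithinAt.div continuousWithinAt_id (by fun_prop) this
  · intro x hx
    have hx0 : 0 < x := hx.1
    have hxc : 0 < x + c := by linarith
    have h := (((hasDerivAt_id x).div ((hasDerivAt_id x).add_const c) hxc.ne').rpow_const
      (p := m) (Or.inl (by simp only [id, Pi.div_apply]; positivity))).div_const c
    refine h.congr_deriv ?_
    simp only [id, Pi.div_apply]
    rw [Real.div_rpow hx0.le hxc.le, show -m - 1 = -(m - 1) + (-2 : ℝ) by ring,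
      Real.rpow_add hxc, Real.rpow_neg hxc.le, show (-2:ℝ) = ((-2:ℤ):ℝ) by norm_num,
      Real.rpow_intCast]
    have := (Real.rpow_pos_of_pos hxc (m - 1)).ne'
    rw [zpow_neg]
    norm_cast
    field_simp
    ring

lemma aux_beta_int (m : ℝ) (hm : 0 < m) :
    IntervalIntegrable (fun t : ℝ => t ^ (m - 1) * (1 - t) ^ ((1:ℝ) / 2 - 1)) volume 0 1 := by
  have hl : ∀ x y : ℝ, 0 < x →
      IntervalIntegrable (fun t : ℝ => t ^ (x - 1) * (1 - t) ^ (y - 1)) volume 0 (1 / 2) := by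
    intro x y hx
    apply IntervalIntegrable.mul_continuousOn
    · exact intervalIntegral.intervalIntegrable_rpow' (by linarith)
    · intro t ht
      rw [uIcc_of_le (by norm_num)] at ht
      apply ContinuousWithinAt.rpow_const (by fun_prop)
      left
      linarith [ht.2]
  refine (hl m (1/2) hm).trans ?_
  have := ((hl (1/2) m (by norm_num)).comp_sub_left 1).symm
  norm_num at this ⊢
  simpa [mul_comm] using this

lemma aux_subst (m b : ℝ) (hm : 0 < m) (hb : 0 < b) :
    ∫ s in (0:ℝ)..b, s ^ (m - 1) * (s + 1) ^ (-m - 1 / 2) = incBeta (b / (1 + b)) m (1 / 2) := by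
  have key : ∀ s : ℝ, 0 ≤ s → ((fun t : ℝ => t ^ (m - 1) * (1 - t) ^ ((1:ℝ) / 2 - 1)) ∘
      (fun s => s / (1 + s))) s * (1 / (1 + s) ^ 2) = s ^ (m - 1) * (s + 1) ^ (-m - 1 / 2) := by
    intro s hs
    have h1 : (0:ℝ) < 1 + s := by linarith
    simp only [Function.comp]
    rw [show 1 - s / (1 + s) = (1 + s)⁻¹ by field_simp; ring, Real.div_rpow hs h1.le,
      Real.inv_rpow h1.le, div_eq_mul_inv, ← Real.rpow_neg h1.le, ← Real.rpow_neg h1.le,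
      one_div ((1 + s) ^ 2), ← Real.rpow_natCast, ← Real.rpow_neg h1.le, mul_assoc, mul_assoc,
      ← Real.rpow_add h1, ← Real.rpow_add h1, add_comm s 1]
    congr 2
    push_cast
    ring
  have h := intervalIntegral.integral_comp_mul_deriv''' (a := 0) (b := b)
    (f := fun s => s / (1 + s)) (f' := fun s => 1 / (1 + s) ^ 2)
    (g := fun t : ℝ => t ^ (m - 1) * (1 - t) ^ ((1:ℝ) / 2 - 1)) ?_ ?_ ?_ ?_ ?_
  · rw [incBeta]
    simp only [zero_div] at h
    rw [← h]
    apply intervalIntegral.integral_congr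
    intro s hs
    rw [uIcc_of_le hb.le] at hs
    exact (key s hs.1).symm
  · intro x hx
    rw [uIcc_of_le hb.le] at hx
    have : 1 + x ≠ 0 := by linarith [hx.1]
    exact ContinuousWithinAt.div continuousWithinAt_id (by fun_prop) this
  · intro x hx
    rw [min_eq_left hb.le] at hx
    have : 1 + x ≠ 0 := by linarith [hx.1]
    have h := (hasDerivAt_id x).div ((hasDerivAt_id x).const_add 1) this
    refine (HasDerivAt.hasDerivWithinAt ?_)
    refine h.congr_deriv ?_
    simp
  · rintro _ ⟨x, hx, rfl⟩
    rw [min_eq_left hb.le] at hx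
    have hx0 := hx.1
    have h1 : x / (1 + x) < 1 := by rw [div_lt_one (by linarith)]; linarith
    have h0 : 0 < x / (1 + x) := by positivity
    apply ContinuousWithinAt.mul
    · exact ContinuousWithinAt.rpow_const continuousWithinAt_id (Or.inl h0.ne')
    · exact ContinuousWithinAt.rpow_const (by fun_prop) (Or.inl (by simp only []; linarith))
  · have := (intervalIntegrable_iff_integrableOn_Icc_of_le (by norm_num)).1 (aux_beta_int m hm)
    refine this.mono_set ?_
    rintro _ ⟨x, hx, rfl⟩
    rw [uIcc_of_le hb.le] at hx
    have hx0 := hx.1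
    exact ⟨by positivity, by rw [div_le_one (by linarith)]; linarith⟩
  · rw [uIcc_of_le hb.le]
    have := (intervalIntegrable_iff_integrableOn_Icc_of_le hb.le).1
      (aux_II m 1 (-m - 1 / 2) b hm one_pos hb)
    refine this.congr_fun (fun s hs => (key s hs.1).symm) measurableSet_Icc

lemma aux_main (m b : ℝ) (hm : 0 < m) (hb : 0 < b) :
    ∫ p in Ioi (0:ℝ), (b / (b + 1 + p)) ^ m * (1 / (Real.sqrt p * (1 + p)))
      = m * auxC m * incBeta (b / (1 + b)) m (1 / 2) := by
  have hsw := intervalIntegral_integral_swap (a := 0) (b := b) (μ := volume.restrict (Ioi (0:ℝ)))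
    (f := fun s p : ℝ => m * s ^ (m - 1) * ((Real.sqrt p)⁻¹ * (s + 1 + p) ^ (-m - 1))) ?_
  · have hL : ∫ s in (0:ℝ)..b, ∫ p in Ioi (0:ℝ),
        m * s ^ (m - 1) * ((Real.sqrt p)⁻¹ * (s + 1 + p) ^ (-m - 1))
        = m * auxC m * incBeta (b / (1 + b)) m (1 / 2) := by
      rw [← aux_subst m b hm hb, ← intervalIntegral.integral_const_mul]
      apply intervalIntegral.integral_congr_ae
      refine Filter.Eventually.of_forall fun s hs => ?_
      rw [uIoc_of_le hb.le] at hs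
      rw [integral_const_mul, (aux_scale m s hm hs.1).2, add_comm 1 s]
      ring
    rw [← hL, hsw]
    apply setIntegral_congr_fun measurableSet_Ioi
    intro p hp
    have hp : 0 < p := hp
    have := aux_ftc m (1 + p) b hm (by linarith) hb
    simp only
    rw [add_assoc, mul_comm, one_div, mul_inv, mul_assoc, ← div_eq_inv_mul (_ ^ m) (1 + p), ← this,
      ← intervalIntegral.integral_const_mul]
    apply intervalIntegral.integral_congr
    intro s _
    simp only [add_assoc]
    ring
  · rw [uIoc_of_le hb.le, integrable_prod_iff]
    · constructor
      · filter_upwards [ae_restrict_mem measurableSet_Ioc] with s hs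
        exact Integrable.const_mul (aux_scale m s hm hs.1).1 (m * s ^ (m - 1))
      · have h := (((intervalIntegrable_iff_integrableOn_Ioc_of_le hb.le).1
          (aux_II m 1 (-m - 1 / 2) b hm one_pos hb)).const_mul (m * auxC m))
        refine IntegrableOn.congr_fun h ?_ measurableSet_Ioc
        intro s hs
        have hs0 : 0 < s := hs.1
        simp only [Function.uncurry]
        rw [setIntegral_congr_fun (g := fun p =>
            m * s ^ (m - 1) * ((Real.sqrt p)⁻¹ * (s + 1 + p) ^ (-m - 1))) measurableSet_Ioi,
          integral_const_mul, (aux_scale m s hm hs.1).2, add_comm 1 s]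
        · ring
        · intro p hp
          have hp : 0 < p := hp
          exact Real.norm_of_nonneg (by positivity)
    · have : Measurable (Function.uncurry fun s p : ℝ =>
          m * s ^ (m - 1) * ((Real.sqrt p)⁻¹ * (s + 1 + p) ^ (-m - 1))) := by
        unfold Function.uncurry
        fun_prop
      exact this.aestronglyMeasurable

open Filter Topology in
lemma aux_pi (m : ℝ) (hm : 0 < m) : Real.pi = m * auxC m * incBeta 1 m (1 / 2) := by
  have hlim : Tendsto (fun b : ℝ => b / (1 + b)) atTop (𝓝 1) := by
    have h : Tendsto (fun b : ℝ => 1 - (1 + b)⁻¹) atTop (𝓝 (1 - 0)) :=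
      (tendsto_inv_atTop_zero.comp (tendsto_atTop_add_const_left _ 1 tendsto_id)).const_sub 1
    rw [sub_zero] at h
    refine h.congr' ?_
    filter_upwards [eventually_gt_atTop 0] with b hb
    field_simp
    ring
  have h1 : Tendsto (fun b : ℝ => m * auxC m * incBeta (b / (1 + b)) m (1 / 2)) atTop
      (𝓝 (m * auxC m * incBeta 1 m (1 / 2))) := by
    apply Tendsto.const_mul
    have hc := intervalIntegral.continuousOn_primitive_interval' (aux_beta_int m hm)
      (left_mem_uIcc)
    have hc1 := hc 1 right_mem_uIcc
    refine hc1.tendsto.comp (tendsto_nhdsWithin_iff.2 ⟨hlim, ?_⟩)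
    filter_upwards [eventually_gt_atTop 0] with b hb
    rw [uIcc_of_le zero_le_one]
    exact ⟨by positivity, by rw [div_le_one (by linarith)]; linarith⟩
  have h2 : Tendsto (fun b : ℝ => ∫ p in Ioi (0:ℝ),
      (b / (b + 1 + p)) ^ m * (1 / (Real.sqrt p * (1 + p)))) atTop (𝓝 Real.pi) := by
    rw [← aux_arctan.2]
    apply tendsto_integral_filter_of_dominated_convergence _ _ _ aux_arctan.1 _
    · exact Eventually.of_forall fun b => (by fun_prop : Measurable _).aestronglyMeasurable
    · filter_upwards [eventually_gt_atTop 0] with b hb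
      filter_upwards [ae_restrict_mem measurableSet_Ioi] with p hp
      have hp : 0 < p := hp
      rw [Real.norm_of_nonneg (by positivity)]
      apply mul_le_of_le_one_left (by positivity)
      apply Real.rpow_le_one (by positivity) _ hm.le
      rw [div_le_one (by positivity)]
      linarith
    · filter_upwards [ae_restrict_mem measurableSet_Ioi] with p hp
      have hp : 0 < p := hp
      have h : Tendsto (fun b : ℝ => b / (b + 1 + p)) atTop (𝓝 1) := by
        have h : Tendsto (fun b : ℝ => 1 - (1 + p) * (1 + p + b)⁻¹) atTop
            (𝓝 (1 - (1 + p) * 0)) :=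
          ((tendsto_inv_atTop_zero.comp
            (tendsto_atTop_add_const_left _ (1 + p) tendsto_id)).const_mul _).const_sub 1
        rw [mul_zero, sub_zero] at h
        refine h.congr' ?_
        filter_upwards [eventually_gt_atTop 0] with b hb
        field_simp
        ring
      have h' := (h.rpow_const (p := m) (Or.inr hm.le)).mul_const (1 / (Real.sqrt p * (1 + p)))
      simpa using h'
  refine tendsto_nhds_unique h2 (h1.congr' ?_)
  filter_upwards [eventually_gt_atTop 0] with b hb
  exact (aux_main m b hm hb).symm

theorem contour_integral_eq_regIncBeta (m b : ℝ) (hm : 0 < m) (hb : 0 < b) :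
    (b ^ m / (2 * Real.pi)) *
        ∫ p in Set.Ioi (0:ℝ), 1 / (Real.sqrt p * (1 + p) * (b + 1 + p) ^ m) =
      (1 / 2) * regIncBeta (b / (1 + b)) m (1 / 2) := by
  have h1 := aux_main m b hm hb
  have h2 := aux_pi m hm
  have h3 : b ^ m * ∫ p in Set.Ioi (0:ℝ), 1 / (Real.sqrt p * (1 + p) * (b + 1 + p) ^ m)
      = m * auxC m * incBeta (b / (1 + b)) m (1 / 2) := by
    rw [← h1, ← integral_const_mul]
    apply setIntegral_congr_fun measurableSet_Ioi
    intro p hp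
    have hp : 0 < p := hp
    simp only
    rw [Real.div_rpow hb.le (by positivity)]
    field_simp
  have hI : incBeta 1 m (1 / 2) ≠ 0 := by
    intro h
    rw [h, mul_zero] at h2
    exact Real.pi_ne_zero h2
  rw [div_mul_eq_mul_div, h3, regIncBeta]
  have hpi := Real.pi_ne_zero
  rw [mul_div_assoc', div_eq_div_iff (by positivity) hI]
  rw [h2]
  ring
end

section
/- For b > 0 and m > 0, the integral R₂ = (b^m/(4π)) ∫₀^∞ I_{1/(b+2+p)}(1/2, m)/(√p(1+p)(b+1+p)^m) dp equals (b^m/(4π)) Σ_{n=0}^∞ [(1-m)_n B(n+m+1, 1/2) / (n! (n+1/2) B(1/2, m))] · F₁(n+m+1, m, n+1/2; m+n+3/2; −b, −(1+b)), where F₁ is the Appell hypergeometric function of the first kind (defined for these negative arguments by its Euler integral representation). -/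
open MeasureTheory Real Set

noncomputable def poch (a : ℝ) (n : ℕ) : ℝ := ∏ i ∈ Finset.range n, (a + i)

/-- Appell F₁ defined by its Euler integral representation (valid for γ > α > 0, x,y < 1). -/
noncomputable def appellF1 (α β β' γ x y : ℝ) : ℝ :=
  (incBeta 1 α (γ - α))⁻¹ *
    ∫ t in (0:ℝ)..1,
      t ^ (α - 1) * (1 - t) ^ (γ - α - 1) * (1 - x * t) ^ (-β) * (1 - y * t) ^ (-β')

lemma aux_coeff (a : ℝ) (n : ℕ) :
    Ring.choose (a + n - 1) n = poch a n / (Nat.factorial n) := by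
  rw [← Ring.multichoose_eq, eq_div_iff (by positivity)]
  have h := Ring.factorial_nsmul_multichoose_eq_ascPochhammer a n
  rw [nsmul_eq_mul, mul_comm] at h
  rw [h, Polynomial.ascPochhammer_smeval_eq_eval]
  clear h
  unfold poch
  induction n with
  | zero => simp
  | succ k ih =>
    rw [Finset.prod_range_succ, ascPochhammer_succ_eval, ih]

lemma aux_binom (m : ℝ) (s : ℝ) (h0 : 0 ≤ s) (h1 : s < 1) :
    HasSum (fun n : ℕ => poch (1 - m) n / (Nat.factorial n) * s ^ n) ((1 - s) ^ (m - 1)) := by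
  have h := (Real.one_div_one_sub_rpow_hasFPowerSeriesOnBall_zero (1 - m)).hasSum (y := s)
    (by simp [abs_of_nonneg h0, ← ENNReal.ofReal_one, edist_dist]; exact h1)
  have e : 1 / (1 - (0 + s)) ^ (1 - m) = (1 - s) ^ (m - 1) := by
    rw [zero_add, one_div, ← Real.rpow_neg (by linarith), neg_sub]
  rw [e] at h
  refine h.congr_fun ?_
  intro n
  simp [FormalMultilinearSeries.ofScalars, aux_coeff]

lemma aux_summable (m : ℝ) :
    Summable (fun n : ℕ => |poch (1 - m) n / (Nat.factorial n)| * (1 / 2 : ℝ) ^ n) := by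
  have := (aux_binom m (1 / 2) (by norm_num) (by norm_num)).summable.abs
  simpa [abs_mul] using this

lemma aux_incBeta (m x : ℝ) (h0 : 0 < x) (h1 : x ≤ 1 / 2) :
    HasSum (fun n : ℕ => poch (1 - m) n / (Nat.factorial n) *
      (x ^ ((n : ℝ) + 1 / 2) / ((n : ℝ) + 1 / 2))) (incBeta x (1 / 2) m) := by
  have hint : IntervalIntegrable (fun s : ℝ => s ^ (1 / 2 - 1 : ℝ)) volume 0 x :=
    intervalIntegral.intervalIntegrable_rpow' (by norm_num)
  have key := intervalIntegral.hasSum_integral_of_dominated_convergence (μ := volume)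
    (a := 0) (b := x)
    (F := fun (n : ℕ) (s : ℝ) => s ^ (1 / 2 - 1 : ℝ) *
      (poch (1 - m) n / (Nat.factorial n) * s ^ n))
    (f := fun s => s ^ (1 / 2 - 1 : ℝ) * (1 - s) ^ (m - 1))
    (fun n s => (|poch (1 - m) n / (Nat.factorial n)| * (1 / 2 : ℝ) ^ n) * s ^ (1 / 2 - 1 : ℝ))
    ?_ ?_ ?_ ?_ ?_
  · unfold incBeta
    refine key.congr_fun ?_
    intro n
    have e : ∫ s in (0:ℝ)..x, s ^ (1 / 2 - 1 : ℝ) * (poch (1 - m) n / (Nat.factorial n) * s ^ n)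
        = ∫ s in (0:ℝ)..x, poch (1 - m) n / (Nat.factorial n) * s ^ ((n : ℝ) - 1 / 2) := by
      refine intervalIntegral.integral_congr_ae (Filter.Eventually.of_forall ?_)
      intro s hs
      rw [uIoc_of_le h0.le] at hs
      rw [show (n : ℝ) - 1 / 2 = (1 / 2 - 1) + n by ring, Real.rpow_add hs.1, Real.rpow_natCast]
      ring
    have hn : (0 : ℝ) ≤ n := Nat.cast_nonneg n
    rw [e, intervalIntegral.integral_const_mul, integral_rpow (Or.inl (by linarith)),
      show (n : ℝ) - 1 / 2 + 1 = n + 1 / 2 by ring, Real.zero_rpow (by positivity), sub_zero]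
  · intro n
    apply Measurable.aestronglyMeasurable
    fun_prop
  · intro n
    refine Filter.Eventually.of_forall ?_
    intro s hs
    rw [uIoc_of_le h0.le] at hs
    have hs0 := hs.1
    have : s ^ n ≤ (1 / 2 : ℝ) ^ n := pow_le_pow_left₀ hs.1.le (by linarith [hs.2]) n
    rw [norm_mul, norm_mul, Real.norm_of_nonneg (Real.rpow_nonneg hs0.le _),
      Real.norm_of_nonneg (pow_nonneg hs0.le n), Real.norm_eq_abs, mul_comm]
    gcongr
  · exact Filter.Eventually.of_forall fun s _ => (aux_summable m).mul_right _
  · simp_rw [tsum_mul_right]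
    exact hint.const_mul _
  · refine Filter.Eventually.of_forall ?_
    intro s hs
    rw [uIoc_of_le h0.le] at hs
    exact (aux_binom m s hs.1.le (by linarith [hs.2])).mul_left _

lemma aux_int : IntegrableOn (fun t : ℝ => (1 - t) ^ (1 / 2 - 1 : ℝ)) (Ioo 0 1) := by
  have h : IntervalIntegrable (fun s : ℝ => s ^ (1 / 2 - 1 : ℝ)) volume 0 1 :=
    intervalIntegral.intervalIntegrable_rpow' (by norm_num)
  have h2 := (h.comp_sub_left 1).symm
  simp only [sub_zero, sub_self] at h2
  rw [intervalIntegrable_iff_integrableOn_Ioo_of_le zero_le_one] at h2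
  exact h2

lemma aux_beta_pos (a : ℝ) (ha : 1 ≤ a) : 0 < incBeta 1 a (1 / 2) := by
  unfold incBeta
  apply intervalIntegral.intervalIntegral_pos_of_pos_on _ _ zero_lt_one
  · rw [intervalIntegrable_iff_integrableOn_Ioo_of_le zero_le_one]
    refine Integrable.mono' aux_int (Measurable.aestronglyMeasurable (by fun_prop)) ?_
    refine (ae_restrict_iff' measurableSet_Ioo).2 (Filter.Eventually.of_forall ?_)
    intro t ht
    have h1 : 0 ≤ (1 - t) ^ (1 / 2 - 1 : ℝ) := Real.rpow_nonneg (by linarith [ht.2]) _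
    rw [Real.norm_of_nonneg (mul_nonneg (Real.rpow_nonneg ht.1.le _) h1)]
    exact mul_le_of_le_one_left h1 (Real.rpow_le_one ht.1.le ht.2.le (by linarith))
  · intro t ht
    exact mul_pos (Real.rpow_pos_of_pos ht.1 _) (Real.rpow_pos_of_pos (by linarith [ht.2]) _)

lemma aux_subst_s10 (g : ℝ → ℝ) :
    ∫ p in Ioi (0:ℝ), g p = ∫ t in Ioo (0:ℝ) 1, (t ^ 2)⁻¹ * g (t⁻¹ - 1) := by
  have him : (fun t : ℝ => t⁻¹ - 1) '' Ioo 0 1 = Ioi 0 := by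
    ext p
    constructor
    · rintro ⟨t, ht, rfl⟩
      have := (one_lt_inv₀ ht.1).2 ht.2
      simp only [mem_Ioi]
      linarith
    · intro hp
      have hp' : 0 < p := hp
      refine ⟨(1 + p)⁻¹, ⟨by positivity, inv_lt_one_of_one_lt₀ (by linarith)⟩, ?_⟩
      simp
  rw [← him, integral_image_eq_integral_abs_deriv_smul measurableSet_Ioo
    (f' := fun t => -(t ^ 2)⁻¹)]
  · refine setIntegral_congr_fun measurableSet_Ioo ?_
    intro t ht
    simp [abs_neg, abs_of_nonneg]
  · intro t ht
    exact ((hasDerivAt_inv ht.1.ne').sub_const 1).hasDerivWithinAt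
  · intro a _ c _ h
    simpa using h

/-- The weight. -/
noncomputable def auxW (b m : ℝ) (n : ℕ) (t : ℝ) : ℝ :=
  t ^ ((n : ℝ) + m) * (1 - t) ^ (1 / 2 - 1 : ℝ) * (1 + b * t) ^ (-m) *
    (1 + (1 + b) * t) ^ (-((n : ℝ) + 1 / 2))

lemma aux_pointwise (b m : ℝ) (hb : 0 < b) (n : ℕ) (t : ℝ) (ht : t ∈ Ioo (0:ℝ) 1) :
    (t ^ 2)⁻¹ * ((1 / (b + 2 + (t⁻¹ - 1))) ^ ((n : ℝ) + 1 / 2) /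
      (Real.sqrt (t⁻¹ - 1) * (1 + (t⁻¹ - 1)) * (b + 1 + (t⁻¹ - 1)) ^ m)) = auxW b m n t := by
  obtain ⟨h0, h1⟩ := ht
  have h1' : 0 < 1 - t := by linarith
  have hA : 0 < 1 + b * t := by positivity
  have hB : 0 < 1 + (1 + b) * t := by positivity
  have e1 : 1 / (b + 2 + (t⁻¹ - 1)) = t / (1 + (1 + b) * t) := by
    rw [show b + 2 + (t⁻¹ - 1) = (1 + (1 + b) * t) / t by field_simp; ring, one_div_div]
  have e2 : t⁻¹ - 1 = (1 - t) / t := by field_simp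
  have e3 : b + 1 + (t⁻¹ - 1) = (1 + b * t) / t := by field_simp; ring
  have e4 : 1 + (t⁻¹ - 1) = t⁻¹ := by ring
  rw [e1, e3, e4, e2, Real.sqrt_eq_rpow, Real.div_rpow h0.le hB.le, Real.div_rpow hA.le h0.le,
    Real.div_rpow h1'.le h0.le]
  unfold auxW
  rw [Real.rpow_neg hA.le, Real.rpow_neg hB.le, Real.rpow_sub h1', Real.rpow_one,
    Real.rpow_add h0, Real.rpow_add h0]
  have s1 : t ^ (1 / 2 : ℝ) * t ^ (1 / 2 : ℝ) = t := by
    rw [← Real.rpow_add h0]; norm_num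
  have s2 : (1 - t) ^ (1 / 2 : ℝ) * (1 - t) ^ (1 / 2 : ℝ) = 1 - t := by
    rw [← Real.rpow_add h1']; norm_num
  have p1 := Real.rpow_pos_of_pos h0 (1 / 2)
  have p2 := Real.rpow_pos_of_pos h1' (1 / 2)
  have p3 := Real.rpow_pos_of_pos h0 (n : ℝ)
  have p4 := Real.rpow_pos_of_pos h0 m
  have p5 := Real.rpow_pos_of_pos hA m
  have p6 := Real.rpow_pos_of_pos hB ((n : ℝ) + 1 / 2)
  generalize t ^ (1 / 2 : ℝ) = u at *
  generalize (1 - t) ^ (1 / 2 : ℝ) = v at *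
  generalize t ^ (n : ℝ) = c at *
  generalize t ^ m = d at *
  generalize (1 + b * t) ^ m = e at *
  generalize (1 + (1 + b) * t) ^ ((n : ℝ) + 1 / 2) = f at *
  have h1n : 1 - t ≠ 0 := h1'.ne'
  rw [← s2, ← s1]
  field_simp

lemma aux_bound (b m : ℝ) (hb : 0 < b) (hm : 0 < m) (n : ℕ) (t : ℝ) (ht : t ∈ Ioo (0:ℝ) 1) :
    0 ≤ auxW b m n t ∧ auxW b m n t ≤ (1 / 2 : ℝ) ^ n * (1 - t) ^ (1 / 2 - 1 : ℝ) := by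
  obtain ⟨h0, h1⟩ := ht
  have h1' : 0 < 1 - t := by linarith
  have hA : 0 < 1 + b * t := by positivity
  have hB : 0 < 1 + (1 + b) * t := by positivity
  refine ⟨by unfold auxW; positivity, ?_⟩
  have e : auxW b m n t = (t / (1 + (1 + b) * t)) ^ n * (1 - t) ^ (1 / 2 - 1 : ℝ) *
      (t ^ m * (1 + b * t) ^ (-m) * (1 + (1 + b) * t) ^ (-(1 / 2) : ℝ)) := by
    unfold auxW
    rw [neg_add, Real.rpow_add h0, Real.rpow_add hB, Real.rpow_neg hB.le (n : ℝ),
      Real.rpow_natCast, Real.rpow_natCast, div_pow]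
    field_simp
  have q1 : t ^ m ≤ 1 := Real.rpow_le_one h0.le h1.le hm.le
  have q2 : (1 + b * t) ^ (-m) ≤ 1 :=
    Real.rpow_le_one_of_one_le_of_nonpos (by nlinarith) (by linarith)
  have q3 : (1 + (1 + b) * t) ^ (-(1 / 2) : ℝ) ≤ 1 :=
    Real.rpow_le_one_of_one_le_of_nonpos (by nlinarith) (by norm_num)
  have q4 : t / (1 + (1 + b) * t) ≤ 1 / 2 := by
    rw [div_le_div_iff₀ hB (by norm_num)]
    nlinarith
  have r2 : 0 ≤ (1 + b * t) ^ (-m) := by positivity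
  have r3 : 0 ≤ (1 + (1 + b) * t) ^ (-(1 / 2) : ℝ) := by positivity
  have q5 : t ^ m * (1 + b * t) ^ (-m) * (1 + (1 + b) * t) ^ (-(1 / 2) : ℝ) ≤ 1 :=
    mul_le_one₀ (mul_le_one₀ q1 r2 q2) r3 q3
  rw [e]
  refine (mul_le_of_le_one_right (by positivity) q5).trans ?_
  gcongr

theorem R2_series_expansion (b m : ℝ) (hb : 0 < b) (hm : 0 < m) :
    (b ^ m / (4 * Real.pi)) *
        (∫ p in Set.Ioi (0:ℝ),
          regIncBeta (1 / (b + 2 + p)) (1 / 2) m /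
            (Real.sqrt p * (1 + p) * (b + 1 + p) ^ m)) =
      (b ^ m / (4 * Real.pi)) *
        ∑' n : ℕ,
          poch (1 - m) n * incBeta 1 ((n : ℝ) + m + 1) (1 / 2) /
              ((Nat.factorial n) * ((n : ℝ) + 1 / 2) * incBeta 1 (1 / 2) m) *
            appellF1 ((n : ℝ) + m + 1) m ((n : ℝ) + 1 / 2) (m + (n : ℝ) + 3 / 2)
              (-b) (-(1 + b)) := by
  congr 1
  rw [aux_subst_s10]
  have key := hasSum_integral_of_dominated_convergence (μ := volume.restrict (Ioo (0:ℝ) 1))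
    (F := fun (n : ℕ) (t : ℝ) => (poch (1 - m) n / (Nat.factorial n) / ((n : ℝ) + 1 / 2) /
      incBeta 1 (1 / 2) m) * auxW b m n t)
    (f := fun t => (t ^ 2)⁻¹ * (regIncBeta (1 / (b + 2 + (t⁻¹ - 1))) (1 / 2) m /
            (Real.sqrt (t⁻¹ - 1) * (1 + (t⁻¹ - 1)) * (b + 1 + (t⁻¹ - 1)) ^ m)))
    (fun n t => (|poch (1 - m) n / (Nat.factorial n)| * (1 / 2 : ℝ) ^ n) *
      (2 / |incBeta 1 (1 / 2) m| * (1 - t) ^ (1 / 2 - 1 : ℝ)))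
    ?_ ?_ ?_ ?_ ?_
  · rw [← key.tsum_eq]
    refine tsum_congr fun n => ?_
    have hn : (0 : ℝ) ≤ n := Nat.cast_nonneg n
    have hpos := aux_beta_pos ((n : ℝ) + m + 1) (by linarith)
    have e : m + (n : ℝ) + 3 / 2 - ((n : ℝ) + m + 1) = 1 / 2 := by ring
    unfold appellF1
    rw [e, integral_const_mul, intervalIntegral.integral_of_le zero_le_one,
      integral_Ioc_eq_integral_Ioo]
    have e2 : ∫ t in Ioo (0:ℝ) 1, t ^ ((n : ℝ) + m + 1 - 1) * (1 - t) ^ (1 / 2 - 1 : ℝ) *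
        (1 - -b * t) ^ (-m) * (1 - -(1 + b) * t) ^ (-((n : ℝ) + 1 / 2)) =
        ∫ t in Ioo (0:ℝ) 1, auxW b m n t := by
      unfold auxW
      simp only [neg_mul, sub_neg_eq_add, add_sub_cancel_right]
    rw [e2]
    have := hpos.ne'
    generalize incBeta 1 (1 / 2) m = B
    field_simp
  · intro n
    apply Measurable.aestronglyMeasurable
    unfold auxW
    fun_prop
  · intro n
    refine (ae_restrict_iff' measurableSet_Ioo).2 (Filter.Eventually.of_forall ?_)
    intro t ht
    obtain ⟨w0, w1⟩ := aux_bound b m hb hm n t ht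
    have hn : (0 : ℝ) ≤ n := Nat.cast_nonneg n
    have h2 : 1 / ((n : ℝ) + 1 / 2) ≤ 2 := by
      rw [div_le_iff₀ (by positivity)]; linarith
    rw [norm_mul, Real.norm_of_nonneg w0, norm_div, norm_div, Real.norm_eq_abs, Real.norm_eq_abs,
      Real.norm_eq_abs, abs_of_nonneg (by positivity : (0:ℝ) ≤ (n : ℝ) + 1 / 2)]
    calc _ ≤ |poch (1 - m) n / (Nat.factorial n)| / ((n : ℝ) + 1 / 2) / |incBeta 1 (1 / 2) m| *
          ((1 / 2 : ℝ) ^ n * (1 - t) ^ (1 / 2 - 1 : ℝ)) := by gcongr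
      _ = |poch (1 - m) n / (Nat.factorial n)| * (1 / 2 : ℝ) ^ n *
          ((1 / ((n : ℝ) + 1 / 2)) / |incBeta 1 (1 / 2) m| * (1 - t) ^ (1 / 2 - 1 : ℝ)) := by
        ring
      _ ≤ _ := by
        have : 0 ≤ (1 - t) ^ (1 / 2 - 1 : ℝ) := Real.rpow_nonneg (by linarith [ht.2]) _
        gcongr
  · exact Filter.Eventually.of_forall fun t => (aux_summable m).mul_right _
  · simp_rw [tsum_mul_right]
    exact (aux_int.const_mul _).const_mul _
  · refine (ae_restrict_iff' measurableSet_Ioo).2 (Filter.Eventually.of_forall ?_)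
    intro t ht
    have hx : 1 < t⁻¹ := (one_lt_inv₀ ht.1).2 ht.2
    have hs := aux_incBeta m (1 / (b + 2 + (t⁻¹ - 1))) (by
        have : 0 < b + 2 + (t⁻¹ - 1) := by linarith
        positivity) (by
        apply one_div_le_one_div_of_le <;> linarith)
    have hs2 := ((hs.div_const (incBeta 1 (1 / 2) m)).div_const
      (Real.sqrt (t⁻¹ - 1) * (1 + (t⁻¹ - 1)) * (b + 1 + (t⁻¹ - 1)) ^ m)).mul_left ((t ^ 2)⁻¹)
    unfold regIncBeta
    refine hs2.congr_fun ?_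
    intro n
    rw [← aux_pointwise b m hb n t ht]
    ring
end
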